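/- For every n ≥ 3, the toric ideal I_{C_n} of the n-cycle C_n is generated in degree ≤ 4 (indeed generated by its homogeneous elements of total degrees 2 and 4), and I_{C_n} is not generated in degree ≤ 3; consequently the Markov width satisfies μ(C_n) = 4. -/

import Mathlib

open MvPolynomial Finset

namespace BinaryGraphModels

variable {V : Type} [Fintype V] [DecidableEq V]

/-- The monomial map `φ_G` of the binary graph model: the variable `p_I` is sent to the
product over edges `{j,k}` of the variable `t^{jk}_{I(j)I(k)}` (encoded as the unordered pair
`{(j, I j), (k, I k)}`) times the product over isolated vertices `l` of `t^{l}_{I(l)}`. -/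
noncomputable def phi (G : SimpleGraph V) :
    MvPolynomial (V → Bool) ℂ →ₐ[ℂ] MvPolynomial (Sym2 (V × Bool) ⊕ (V × Bool)) ℂ := by
  letI : DecidableRel G.Adj := Classical.decRel _
  exact aeval fun I : V → Bool =>
    (∏ e ∈ G.edgeFinset,
      (X (Sum.inl (Sym2.map (fun v => (v, I v)) e)) :
        MvPolynomial (Sym2 (V × Bool) ⊕ (V × Bool)) ℂ)) *
    ∏ l ∈ univ.filter (fun l : V => ∀ k, ¬ G.Adj l k), X (Sum.inr (l, I l))

/-- The toric ideal `I_G` of the binary graph model of `G`. -/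
noncomputable def toricIdeal (G : SimpleGraph V) : Ideal (MvPolynomial (V → Bool) ℂ) :=
  RingHom.ker (phi G).toRingHom

/-- `I_G` is generated in degree at most `d`. -/
def GenInDegLE (G : SimpleGraph V) (d : ℕ) : Prop :=
  toricIdeal G =
    Ideal.span {f : MvPolynomial (V → Bool) ℂ | f ∈ toricIdeal G ∧ f.totalDegree ≤ d}

/-- The Markov width `μ(G)`: the least `d` such that `I_G` is generated in degree `≤ d`. -/
noncomputable def markovWidth (G : SimpleGraph V) : ℕ :=
  sInf {d : ℕ | GenInDegLE G d}

/-- `f` is a minimal generator of `I_G`, i.e. `f ∈ I_G` and `f ∉ 𝔪 · I_G` where `𝔪` is the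
irrelevant maximal ideal generated by all the variables. -/
def IsMinimalGenerator (G : SimpleGraph V) (f : MvPolynomial (V → Bool) ℂ) : Prop :=
  f ∈ toricIdeal G ∧
    f ∉ Ideal.span (Set.range (X : (V → Bool) → MvPolynomial (V → Bool) ℂ)) * toricIdeal G

/-- Two integer tables have the same `G`-marginals: equal two-way marginals along every edge
and equal one-way marginals at every isolated vertex. -/
def MarginalsEq (G : SimpleGraph V) (v₁ v₂ : (V → Bool) → ℤ) : Prop :=
  (∀ j k : V, G.Adj j k → ∀ a b : Bool,
    (∑ I : V → Bool, if I j = a ∧ I k = b then v₁ I else 0) =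
    (∑ I : V → Bool, if I j = a ∧ I k = b then v₂ I else 0)) ∧
  (∀ l : V, (∀ k, ¬ G.Adj l k) → ∀ a : Bool,
    (∑ I : V → Bool, if I l = a then v₁ I else 0) =
    (∑ I : V → Bool, if I l = a then v₂ I else 0))

/-- `B` is a Markov basis for `G`: any two nonnegative tables with the same `G`-marginals are
connected by a path of moves from `±B` staying nonnegative. -/
def IsMarkovBasis (G : SimpleGraph V) (B : Finset ((V → Bool) → ℤ)) : Prop :=
  ∀ v₁ v₂ : (V → Bool) → ℤ, (∀ I, 0 ≤ v₁ I) → (∀ I, 0 ≤ v₂ I) →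
    MarginalsEq G v₁ v₂ →
    ∃ L : List ((V → Bool) → ℤ),
      (∀ u ∈ L, u ∈ B ∨ -u ∈ B) ∧
      v₁ + L.sum = v₂ ∧
      ∀ n : ℕ, n ≤ L.length → ∀ I, 0 ≤ (v₁ + (L.take n).sum) I

/-- The binomial `p^{u⁺} - p^{u⁻}` associated to an integer table `u`. -/
noncomputable def moveBinomial (u : (V → Bool) → ℤ) : MvPolynomial (V → Bool) ℂ :=
  (∏ I : V → Bool, X I ^ (u I).toNat) - ∏ I : V → Bool, X I ^ (-u I).toNat

end BinaryGraphModels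

namespace BinaryGraphModels

section Combinatorics

/-- A basic move: two multisets of states with equal statistics and equal size in `D`. -/
def Mv {Ω : Type} (K : AddCon (Multiset Ω)) (D : Set ℕ) (s t : Multiset Ω) : Prop :=
  K s t ∧ s.card = t.card ∧ s.card ∈ D

/-- Every fibre of `K` is connected by moves with sizes in `D`. -/
def Gen {Ω : Type} (K : AddCon (Multiset Ω)) (D : Set ℕ) : Prop :=
  ∀ s t, K s t → AddConGen.Rel (Mv K D) s t

/-- The congruence of having equal marginals. -/
def margCon {Ω ι β : Type} (f : ι → Ω → β) : AddCon (Multiset Ω) where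
  r s t := ∀ i, s.map (f i) = t.map (f i)
  iseqv := ⟨fun _ _ => rfl, fun h i => (h i).symm, fun h h' i => (h i).trans (h' i)⟩
  add' := by
    intro a b c d h h' i
    rw [Multiset.map_add, Multiset.map_add, h i, h' i]

theorem margCon_iff {Ω ι β : Type} (f : ι → Ω → β) (s t : Multiset Ω) :
    margCon f s t ↔ ∀ i, s.map (f i) = t.map (f i) := Iff.rfl

/-- `Z` is the fibre product of `A` and `B` over `C`. -/
structure IsFib {Z A B C : Type} (p : Z → A) (q : Z → B) (c : A → C) (d : B → C) : Prop where
  comm : ∀ z, c (p z) = d (q z)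
  ex : ∀ a b, c a = d b → ∃ z, p z = a ∧ q z = b
  inj : ∀ z z', p z = p z' → q z = q z' → z = z'

namespace IsFib

variable {Z A B C : Type} {p : Z → A} {q : Z → B} {c : A → C} {d : B → C}

theorem swap (h : IsFib p q c d) : IsFib q p d c :=
  ⟨fun z => (h.comm z).symm, fun a b hab => by
    obtain ⟨z, h1, h2⟩ := h.ex b a hab.symm
    exact ⟨z, h2, h1⟩, fun z z' h1 h2 => h.inj z z' h2 h1⟩

theorem map_comm (h : IsFib p q c d) (s : Multiset Z) :
    (s.map p).map c = (s.map q).map d := by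
  rw [Multiset.map_map, Multiset.map_map]
  exact Multiset.map_congr rfl fun z _ => h.comm z

theorem glue (h : IsFib p q c d) (a : Multiset A) :
    ∀ b : Multiset B, a.map c = b.map d → ∃ s : Multiset Z, s.map p = a ∧ s.map q = b := by
  classical
  induction a using Multiset.induction_on with
  | empty =>
    intro b hb
    refine ⟨0, rfl, ?_⟩
    simp only [Multiset.map_zero] at hb
    rw [Multiset.map_zero, Multiset.map_eq_zero.1 hb.symm]
  | cons x a ih =>
    intro b hb
    rw [Multiset.map_cons] at hb
    obtain ⟨y, hy, hyx, hb'⟩ := (Multiset.map_eq_cons d b (a.map c) (c x)).2 hb.symm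
    obtain ⟨s, hs1, hs2⟩ := ih (b.erase y) hb'.symm
    obtain ⟨z, hz1, hz2⟩ := h.ex x y hyx.symm
    refine ⟨z ::ₘ s, ?_, ?_⟩
    · rw [Multiset.map_cons, hz1, hs1]
    · rw [Multiset.map_cons, hz2, hs2, Multiset.cons_erase hy]

variable {K : AddCon (Multiset Z)} {D : Set ℕ}

/-- Two tables with the same projections are connected by quadratic moves. -/
theorem conn_of_eq (h : IsFib p q c d) (h2 : 2 ∈ D)
    (hK : ∀ s t : Multiset Z, s.map p = t.map p → s.map q = t.map q → K s t) (s : Multiset Z) :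
    ∀ t : Multiset Z, s.map p = t.map p → s.map q = t.map q → AddConGen.Rel (Mv K D) s t := by
  classical
  induction s using Multiset.induction_on with
  | empty =>
    intro t ht _
    rw [Multiset.map_zero] at ht
    rw [Multiset.map_eq_zero.1 ht.symm]
    exact AddConGen.Rel.refl _
  | cons z s ih =>
    intro t hp hq
    have hpz : p z ∈ t.map p := by rw [← hp]; simp
    have hqz : q z ∈ t.map q := by rw [← hq]; simp
    obtain ⟨z1, hz1, hz1p⟩ := Multiset.mem_map.1 hpz
    obtain ⟨t1, rfl⟩ := Multiset.exists_cons_of_mem hz1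
    obtain ⟨z2, hz2, hz2q⟩ := Multiset.mem_map.1 hqz
    -- it suffices to reach a table containing z
    have key : ∀ t' : Multiset Z, (z ::ₘ t').map p = (z1 ::ₘ t1).map p →
        (z ::ₘ t').map q = (z1 ::ₘ t1).map q → AddConGen.Rel (Mv K D) (z ::ₘ s) (z ::ₘ t') := by
      intro t' h1 h2
      have := ih t' (by
        rw [← h1, Multiset.map_cons, Multiset.map_cons] at hp
        exact (Multiset.cons_inj_right _).1 hp) (by
        rw [← h2, Multiset.map_cons, Multiset.map_cons] at hq
        exact (Multiset.cons_inj_right _).1 hq)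
      rw [← Multiset.singleton_add, ← Multiset.singleton_add]
      exact AddConGen.Rel.add (AddConGen.Rel.refl _) this
    rcases Multiset.mem_cons.1 hz2 with hh | hh
    · have : z1 = z := h.inj _ _ hz1p (by rw [← hh, hz2q])
      subst this
      exact key t1 rfl rfl
    · obtain ⟨t2, rfl⟩ := Multiset.exists_cons_of_mem hh
      obtain ⟨w, hwp, hwq⟩ := h.ex (p z2) (q z1) (by
        rw [h.comm, hz2q, ← h.comm, ← hz1p, h.comm])
      have e1 : (z ::ₘ w ::ₘ t2).map p = (z1 ::ₘ z2 ::ₘ t2).map p := by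
        simp [hz1p, hwp]
      have e2 : (z ::ₘ w ::ₘ t2).map q = (z1 ::ₘ z2 ::ₘ t2).map q := by
        simp only [Multiset.map_cons, hz2q, hwq]
        exact Multiset.cons_swap _ _ _
      refine AddConGen.Rel.trans (key (w ::ₘ t2) e1 e2) ?_
      have e3 : ∀ x y : Z, x ::ₘ y ::ₘ t2 = {x, y} + t2 := by
        intro x y
        simp [Multiset.insert_eq_cons]
      rw [e3, e3]
      refine AddConGen.Rel.add (AddConGen.Rel.of _ _ ⟨hK _ _ ?_ ?_, by simp, by simpa using h2⟩)
        (AddConGen.Rel.refl _)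
      · simp [hz1p, hwp]
      · simp only [Multiset.insert_eq_cons, Multiset.map_cons, Multiset.map_singleton, hz2q, hwq]
        exact Multiset.pair_comm _ _

theorem exists_split {α β : Type} (f : α → β) (a : Multiset β) :
    ∀ (b : Multiset β) (s : Multiset α), s.map f = a + b →
      ∃ s1 s2, s = s1 + s2 ∧ s1.map f = a ∧ s2.map f = b := by
  classical
  induction a using Multiset.induction_on with
  | empty => intro b s hs; exact ⟨0, s, by simp, rfl, by simpa using hs⟩
  | cons x a ih =>
    intro b s hs
    rw [Multiset.cons_add] at hs
    obtain ⟨y, hy, hyx, hb'⟩ := (Multiset.map_eq_cons f s (a + b) x).2 hs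
    obtain ⟨s1, s2, h1, h2, h3⟩ := ih b _ hb'
    refine ⟨y ::ₘ s1, s2, ?_, by simp [hyx, h2], h3⟩
    rw [Multiset.cons_add, ← h1, Multiset.cons_erase hy]

/-- Lifting of moves from the first factor. -/
theorem lift_fst (h : IsFib p q c d) (h2 : 2 ∈ D) {K1 : AddCon (Multiset A)}
    (hK : ∀ s t : Multiset Z, K1 (s.map p) (t.map p) → s.map q = t.map q → K s t)
    (hc : ∀ s t, K1 s t → s.map c = t.map c) {a b : Multiset A}
    (hab : AddConGen.Rel (Mv K1 D) a b) :
    a.map c = b.map c ∧ ∀ s t : Multiset Z, s.map p = a → t.map p = b → s.map q = t.map q →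
      AddConGen.Rel (Mv K D) s t := by
  have hK' : ∀ s t : Multiset Z, s.map p = t.map p → s.map q = t.map q → K s t := by
    intro s t h1 h2
    exact hK s t (h1 ▸ K1.refl _) h2
  induction hab with
  | of a b hab =>
    refine ⟨hc _ _ hab.1, ?_⟩
    rintro s t rfl rfl hq
    refine AddConGen.Rel.of _ _ ⟨hK _ _ hab.1 hq, ?_, ?_⟩
    · simpa using hab.2.1
    · simpa using hab.2.2
  | refl a => exact ⟨rfl, fun s t hs ht hq => h.conn_of_eq h2 hK' s t (hs.trans ht.symm) hq⟩
  | symm _ ih => exact ⟨ih.1.symm, fun s t hs ht hq => (ih.2 t s ht hs hq.symm).symm⟩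
  | trans _ _ ih1 ih2 =>
    refine ⟨ih1.1.trans ih2.1, fun s t hs ht hq => ?_⟩
    obtain ⟨u, hu1, hu2⟩ := h.glue _ (s.map q) (by rw [← ih1.1, ← hs, h.map_comm])
    exact (ih1.2 s u hs hu1 hu2.symm).trans (ih2.2 u t hu1 ht (hu2.trans hq))
  | add _ _ ih1 ih2 =>
    refine ⟨by rw [Multiset.map_add, Multiset.map_add, ih1.1, ih2.1], fun s t hs ht hq => ?_⟩
    obtain ⟨s1, s2, rfl, h1, h2'⟩ := exists_split p _ _ _ hs
    obtain ⟨u1, hu1, hu1'⟩ := h.glue _ (s1.map q) (by rw [← ih1.1, ← h1, h.map_comm])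
    obtain ⟨u2, hu2, hu2'⟩ := h.glue _ (s2.map q) (by rw [← ih2.1, ← h2', h.map_comm])
    refine ((ih1.2 s1 u1 h1 hu1 hu1'.symm).add (ih2.2 s2 u2 h2' hu2 hu2'.symm)).trans ?_
    refine h.conn_of_eq h2 hK' _ _ ?_ ?_
    · rw [Multiset.map_add, hu1, hu2, ht]
    · rw [Multiset.map_add, hu1', hu2', ← Multiset.map_add, hq]

/-- Gluing along a clique preserves the generating degrees. -/
theorem gen (h : IsFib p q c d) (h2 : 2 ∈ D) {K1 : AddCon (Multiset A)} {K2 : AddCon (Multiset B)}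
    (hK : ∀ s t : Multiset Z, K s t ↔ K1 (s.map p) (t.map p) ∧ K2 (s.map q) (t.map q))
    (hc : ∀ s t, K1 s t → s.map c = t.map c) (hd : ∀ s t, K2 s t → s.map d = t.map d)
    (g1 : Gen K1 D) (g2 : Gen K2 D) : Gen K D := by
  intro s t hst
  obtain ⟨k1, k2⟩ := (hK s t).1 hst
  obtain ⟨u, hu1, hu2⟩ := h.glue (t.map p) (s.map q) (by
    rw [← hc _ _ k1, h.map_comm])
  have l1 := (h.lift_fst h2 (K := K)
    (fun s t a b => (hK s t).2 ⟨a, b ▸ K2.refl _⟩) hc (g1 _ _ k1)).2 s u rfl hu1 hu2.symm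
  have l2 := (h.swap.lift_fst h2 (K := K)
    (fun s t a b => (hK s t).2 ⟨b ▸ K1.refl _, a⟩) hd (g2 _ _ k2)).2 u t hu2 rfl hu1
  exact l1.trans l2

end IsFib

end Combinatorics

section Chord

theorem count_fst (x : Multiset (Bool × Bool)) (a : Bool) :
    (x.map Prod.fst).count a = x.count (a, true) + x.count (a, false) := by
  induction x using Multiset.induction_on with
  | empty => simp
  | cons w x ih =>
    rw [Multiset.map_cons, Multiset.count_cons, Multiset.count_cons, Multiset.count_cons, ih]
    obtain ⟨u, v⟩ := w
    cases u <;> cases v <;> cases a <;> simp <;> omega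

theorem count_snd (x : Multiset (Bool × Bool)) (a : Bool) :
    (x.map Prod.snd).count a = x.count (true, a) + x.count (false, a) := by
  induction x using Multiset.induction_on with
  | empty => simp
  | cons w x ih =>
    rw [Multiset.map_cons, Multiset.count_cons, Multiset.count_cons, Multiset.count_cons, ih]
    obtain ⟨u, v⟩ := w
    cases u <;> cases v <;> cases a <;> simp <;> omega

theorem card_eq_counts (x : Multiset (Bool × Bool)) :
    x.card = x.count (true, true) + x.count (true, false) + x.count (false, true)
      + x.count (false, false) := by
  induction x using Multiset.induction_on with
  | empty => simp
  | cons w x ih =>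
    rw [Multiset.card_cons, Multiset.count_cons, Multiset.count_cons, Multiset.count_cons,
      Multiset.count_cons, ih]
    obtain ⟨u, v⟩ := w
    cases u <;> cases v <;> simp <;> omega

theorem marg_eqs {x y : Multiset (Bool × Bool)} (h1 : x.map Prod.fst = y.map Prod.fst)
    (h2 : x.map Prod.snd = y.map Prod.snd) :
    (∀ a, x.count (a, true) + x.count (a, false) = y.count (a, true) + y.count (a, false)) ∧
    (∀ a, x.count (true, a) + x.count (false, a) = y.count (true, a) + y.count (false, a)) := by
  refine ⟨fun a => ?_, fun a => ?_⟩
  · rw [← count_fst, ← count_fst, h1]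
  · rw [← count_snd, ← count_snd, h2]

theorem eq_of_marg {x y : Multiset (Bool × Bool)} (h1 : x.map Prod.fst = y.map Prod.fst)
    (h2 : x.map Prod.snd = y.map Prod.snd) (h : x.count (true, true) = y.count (true, true)) :
    x = y := by
  obtain ⟨e1, e2⟩ := marg_eqs h1 h2
  have := e1 true
  have := e1 false
  have := e2 true
  have := e2 false
  ext ⟨a, b⟩
  cases a <;> cases b <;> omega

theorem two_le {x y : Multiset (Bool × Bool)} (h1 : x.map Prod.fst = y.map Prod.fst)
    (h2 : x.map Prod.snd = y.map Prod.snd) (hx : x.card = 2) :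
    y.count (true, true) ≤ x.count (true, true) + 1 := by
  obtain ⟨e1, e2⟩ := marg_eqs h1 h2
  have := e1 true
  have := e2 true
  rw [card_eq_counts] at hx
  omega

theorem two_eq {x y : Multiset (Bool × Bool)} (h1 : x.map Prod.fst = y.map Prod.fst)
    (h2 : x.map Prod.snd = y.map Prod.snd) (hx : x.card = 2)
    (h : y.count (true, true) = x.count (true, true) + 1) :
    x = {(true, false), (false, true)} ∧ y = {(true, true), (false, false)} := by
  obtain ⟨e1, e2⟩ := marg_eqs h1 h2
  have := e1 true
  have := e1 false
  have := e2 true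
  have := e2 false
  rw [card_eq_counts] at hx
  have x1 : x.count (true, true) = 0 := by omega
  have x2 : x.count (true, false) = 1 := by omega
  have x3 : x.count (false, true) = 1 := by omega
  have x4 : x.count (false, false) = 0 := by omega
  have y1 : y.count (true, true) = 1 := by omega
  have y2 : y.count (true, false) = 0 := by omega
  have y3 : y.count (false, true) = 0 := by omega
  have y4 : y.count (false, false) = 1 := by omega
  constructor
  · ext ⟨a, b⟩
    cases a <;> cases b <;> simp only [x1, x2, x3, x4] <;> decide
  · ext ⟨a, b⟩
    cases a <;> cases b <;> simp only [y1, y2, y3, y4] <;> decide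

/-- The number of states with chord value `(1,1)`. -/
def chordCount {Ω : Type} (c : Ω → Bool × Bool) (s : Multiset Ω) : ℕ :=
  (s.map c).count (true, true)

theorem chordCount_add {Ω : Type} (c : Ω → Bool × Bool) (s t : Multiset Ω) :
    chordCount c (s + t) = chordCount c s + chordCount c t := by
  simp [chordCount]

/-- The statistics determine the one-way marginals of the chord. -/
def Det {Ω : Type} (K : AddCon (Multiset Ω)) (c : Ω → Bool × Bool) : Prop :=
  ∀ s t, K s t → (s.map c).map Prod.fst = (t.map c).map Prod.fst ∧
    (s.map c).map Prod.snd = (t.map c).map Prod.snd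

theorem rel_K {Ω : Type} {K : AddCon (Multiset Ω)} {D : Set ℕ} {s t : Multiset Ω}
    (h : AddConGen.Rel (Mv K D) s t) : K s t := by
  induction h with
  | of _ _ h => exact h.1
  | refl _ => exact K.refl _
  | symm _ ih => exact K.symm ih
  | trans _ _ ih1 ih2 => exact K.trans ih1 ih2
  | add _ _ ih1 ih2 => exact K.add ih1 ih2

theorem ivt {Ω : Type} {K : AddCon (Multiset Ω)} {c : Ω → Bool × Bool} (hd : Det K c)
    {s t : Multiset Ω} (h : AddConGen.Rel (Mv K {2}) s t) :
    ∀ k, (chordCount c s ≤ k ∧ k < chordCount c t ∨ chordCount c t ≤ k ∧ k < chordCount c s) →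
      ∃ u a b, Mv K {2} a b ∧ K s (u + a) ∧ chordCount c (u + a) = k ∧
        chordCount c (u + b) = k + 1 := by
  have hcard : ∀ a b, Mv K {2} a b → (a.map c).card = 2 := by
    intro a b hab
    rw [Multiset.card_map]; exact hab.2.2
  have hsymm : ∀ a b, Mv K {2} a b → Mv K {2} b a := by
    intro a b hab
    exact ⟨K.symm hab.1, hab.2.1.symm, hab.2.1 ▸ hab.2.2⟩
  induction h with
  | of a b hab =>
    intro k hk
    have l1 := two_le (hd _ _ hab.1).1 (hd _ _ hab.1).2 (hcard _ _ hab)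
    have l2 := two_le (hd _ _ hab.1).1.symm (hd _ _ hab.1).2.symm (hcard _ _ (hsymm _ _ hab))
    change chordCount c b ≤ chordCount c a + 1 at l1
    change chordCount c a ≤ chordCount c b + 1 at l2
    rcases hk with hk | hk
    · refine ⟨0, a, b, hab, ?_, ?_, ?_⟩
      · rw [zero_add]; exact K.refl _
      · rw [zero_add]; omega
      · rw [zero_add]; omega
    · refine ⟨0, b, a, hsymm _ _ hab, ?_, ?_, ?_⟩
      · rw [zero_add]; exact hab.1
      · rw [zero_add]; omega
      · rw [zero_add]; omega
  | refl a => intro k hk; omega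
  | symm h ih =>
    intro k hk
    obtain ⟨u, a, b, h1, h2, h3⟩ := ih k hk.symm
    exact ⟨u, a, b, h1, K.trans (K.symm (rel_K h)) h2, h3⟩
  | @trans x y z hxy hyz ih1 ih2 =>
    intro k hk
    by_cases hc : chordCount c x ≤ k ∧ k < chordCount c y ∨
        chordCount c y ≤ k ∧ k < chordCount c x
    · exact ih1 k hc
    · obtain ⟨u, a, b, h1, h2, h3⟩ := ih2 k (by omega)
      exact ⟨u, a, b, h1, K.trans (rel_K hxy) h2, h3⟩
  | @add w x y z hwx hyz ih1 ih2 =>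
    intro k hk
    rw [chordCount_add, chordCount_add] at hk
    by_cases hc : chordCount c w + chordCount c y ≤ k ∧ k < chordCount c x + chordCount c y ∨
        chordCount c x + chordCount c y ≤ k ∧ k < chordCount c w + chordCount c y
    · obtain ⟨u, a, b, h1, h2, h3, h4⟩ := ih1 (k - chordCount c y) (by omega)
      refine ⟨u + y, a, b, h1, ?_, ?_, ?_⟩
      · rw [add_right_comm]; exact K.add h2 (K.refl _)
      · rw [add_right_comm, chordCount_add, h3]; omega
      · rw [add_right_comm, chordCount_add, h4]; omega
    · obtain ⟨u, a, b, h1, h2, h3, h4⟩ := ih2 (k - chordCount c x) (by omega)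
      refine ⟨x + u, a, b, h1, ?_, ?_, ?_⟩
      · rw [add_assoc]; exact K.add (rel_K hwx) h2
      · rw [add_assoc, chordCount_add, h3]; omega
      · rw [add_assoc, chordCount_add, h4]; omega

/-- Removing the chord along which two models are glued. -/
theorem IsFib.gen_chord {Z A B : Type} {p : Z → A} {q : Z → B} {c : A → Bool × Bool}
    {d : B → Bool × Bool} (h : IsFib p q c d) {D : Set ℕ} (h2 : 2 ∈ D)
    {K K' : AddCon (Multiset Z)} {K1 : AddCon (Multiset A)} {K2 : AddCon (Multiset B)}
    (hK : ∀ s t : Multiset Z, K s t ↔ K1 (s.map p) (t.map p) ∧ K2 (s.map q) (t.map q))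
    (hK' : ∀ s t : Multiset Z, K' s t ↔ K s t ∧ (s.map p).map c = (t.map p).map c)
    (hc : Det K1 c) (hd : Det K2 d) (g1 : Gen K1 {2}) (g2 : Gen K2 {2}) (g : Gen K' D) :
    Gen K D := by
  have hmono : ∀ {s t}, AddConGen.Rel (Mv K' D) s t → AddConGen.Rel (Mv K D) s t := by
    intro s t hst
    induction hst with
    | of _ _ h => exact AddConGen.Rel.of _ _ ⟨((hK' _ _).1 h.1).1, h.2⟩
    | refl _ => exact AddConGen.Rel.refl _
    | symm _ ih => exact ih.symm
    | trans _ _ ih1 ih2 => exact ih1.trans ih2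
    | add _ _ ih1 ih2 => exact ih1.add ih2
  have hcq : ∀ s : Multiset Z, chordCount d (s.map q) = chordCount c (s.map p) := by
    intro s
    rw [chordCount, chordCount, h.map_comm]
  -- same fibre, same chord count
  have same : ∀ s t : Multiset Z, K s t → chordCount c (s.map p) = chordCount c (t.map p) →
      AddConGen.Rel (Mv K D) s t := by
    intro s t hst he
    refine hmono (g _ _ ((hK' _ _).2 ⟨hst, ?_⟩))
    have := hc _ _ ((hK _ _).1 hst).1
    exact eq_of_marg this.1 this.2 he
  have main : ∀ (n : ℕ) (s t : Multiset Z), K s t →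
      chordCount c (s.map p) + n = chordCount c (t.map p) → AddConGen.Rel (Mv K D) s t := by
    intro n
    induction n with
    | zero => intro s t hst he; exact same s t hst (by simpa using he)
    | succ n ih =>
      intro s t hst he
      obtain ⟨k1, k2⟩ := (hK _ _).1 hst
      obtain ⟨u, a, b, hab, hu, hua, hub⟩ := ivt hc (g1 _ _ k1) (chordCount c (s.map p))
        (Or.inl ⟨le_rfl, by omega⟩)
      obtain ⟨u', a', b', hab', hu', hua', hub'⟩ := ivt hd (g2 _ _ k2) (chordCount c (s.map p))
        (Or.inl ⟨by rw [hcq], by rw [hcq]; omega⟩)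
      have ea := two_eq (hc _ _ hab.1).1 (hc _ _ hab.1).2
        (by rw [Multiset.card_map]; exact hab.2.2) (by
          rw [chordCount_add] at hua hub
          change chordCount c b = chordCount c a + 1
          omega)
      have ea' := two_eq (hd _ _ hab'.1).1 (hd _ _ hab'.1).2
        (by rw [Multiset.card_map]; exact hab'.2.2) (by
          rw [chordCount_add] at hua' hub'
          change chordCount d b' = chordCount d a' + 1
          omega)
      have e1 : ((s.map p).map c) = (u + a).map c :=
        eq_of_marg (hc _ _ hu).1 (hc _ _ hu).2 hua.symm
      have e2 : ((s.map q).map d) = (u' + a').map d :=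
        eq_of_marg (hd _ _ hu').1 (hd _ _ hu').2 ((hcq s).trans hua'.symm)
      have eu : u.map c = u'.map d := by
        rw [h.map_comm, e2, Multiset.map_add, Multiset.map_add, ea.1, ea'.1] at e1
        exact (add_right_cancel e1).symm
      obtain ⟨w, hw1, hw2⟩ := h.glue u u' eu
      obtain ⟨x, hx1, hx2⟩ := h.glue a a' (ea.1.trans ea'.1.symm)
      obtain ⟨y, hy1, hy2⟩ := h.glue b b' (ea.2.trans ea'.2.symm)
      have m1 : AddConGen.Rel (Mv K D) s (w + x) := by
        apply same
        · rw [hK, Multiset.map_add, Multiset.map_add, hw1, hw2, hx1, hx2]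
          exact ⟨hu, hu'⟩
        · rw [Multiset.map_add, hw1, hx1, hua]
      have cx : x.card = 2 := by
        rw [← Multiset.card_map p, hx1]; exact hab.2.2
      have cy : y.card = 2 := by
        rw [← Multiset.card_map p, hy1, ← hab.2.1]; exact hab.2.2
      have m2 : AddConGen.Rel (Mv K D) (w + x) (w + y) := by
        refine (AddConGen.Rel.refl _).add (AddConGen.Rel.of _ _ ⟨?_, cx.trans cy.symm, ?_⟩)
        · rw [hK, hx1, hx2, hy1, hy2]; exact ⟨hab.1, hab'.1⟩
        · rw [cx]; exact h2
      have m := m1.trans m2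
      refine m.trans (ih _ _ (K.trans (K.symm (rel_K m)) hst) ?_)
      rw [Multiset.map_add, hw1, hy1, hub]
      omega
  intro s t hst
  rcases le_total (chordCount c (s.map p)) (chordCount c (t.map p)) with hle | hle
  · exact main _ s t hst (Nat.add_sub_of_le hle)
  · exact (main _ t s (K.symm hst) (Nat.add_sub_of_le hle)).symm

end Chord

section Models

theorem gen_of_injective {Ω ι β : Type} (f : ι → Ω → β) (i : ι) (hi : Function.Injective (f i))
    (D : Set ℕ) : Gen (margCon f) D := by
  intro s t h
  rw [Multiset.map_injective hi (h i)]
  exact AddConGen.Rel.refl _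

/-- The edge maps of the triangle on the states `(a, x, b)`; the edge `2` is the chord. -/
def triEdge : Fin 3 → Bool × Bool × Bool → Bool × Bool
  | 0 => fun w => (w.1, w.2.1)
  | 1 => fun w => (w.2.1, w.2.2)
  | 2 => fun w => (w.1, w.2.2)

theorem triEdge_count (s : Multiset (Bool × Bool × Bool)) (a b : Bool) :
    (s.map (triEdge 0)).count (a, b) = s.count (a, b, true) + s.count (a, b, false) ∧
    (s.map (triEdge 1)).count (a, b) = s.count (true, a, b) + s.count (false, a, b) ∧
    (s.map (triEdge 2)).count (a, b) = s.count (a, true, b) + s.count (a, false, b) := by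
  induction s using Multiset.induction_on with
  | empty => simp
  | cons w s ih =>
    obtain ⟨h1, h2, h3⟩ := ih
    simp only [Multiset.map_cons, Multiset.count_cons, h1, h2, h3]
    obtain ⟨u, v, w⟩ := w
    simp only [triEdge]
    refine ⟨?_, ?_, ?_⟩ <;> cases u <;> cases v <;> cases w <;> cases a <;> cases b <;>
      simp <;> omega

/-- The even states of the triangle. -/
def triEven : Multiset (Bool × Bool × Bool) :=
  {(false, false, false), (false, true, true), (true, false, true), (true, true, false)}

/-- The odd states of the triangle. -/
def triOdd : Multiset (Bool × Bool × Bool) :=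
  {(true, true, true), (true, false, false), (false, true, false), (false, false, true)}

theorem tri_key {s t : Multiset (Bool × Bool × Bool)} (h : margCon triEdge s t)
    (hle : t.count (false, false, false) ≤ s.count (false, false, false)) :
    ∃ (k : ℕ) (u : Multiset (Bool × Bool × Bool)), s = k • triEven + u ∧ t = k • triOdd + u := by
  have e0 : ∀ a b, s.count (a, b, true) + s.count (a, b, false) =
      t.count (a, b, true) + t.count (a, b, false) := by
    intro a b
    rw [← (triEdge_count s a b).1, ← (triEdge_count t a b).1, h 0]
  have e1 : ∀ a b, s.count (true, a, b) + s.count (false, a, b) =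
      t.count (true, a, b) + t.count (false, a, b) := by
    intro a b
    rw [← (triEdge_count s a b).2.1, ← (triEdge_count t a b).2.1, h 1]
  have e2 : ∀ a b, s.count (a, true, b) + s.count (a, false, b) =
      t.count (a, true, b) + t.count (a, false, b) := by
    intro a b
    rw [← (triEdge_count s a b).2.2, ← (triEdge_count t a b).2.2, h 2]
  have a1 := e0 false false
  have a2 := e0 false true
  have a3 := e0 true false
  have a4 := e0 true true
  have a5 := e1 false false
  have a6 := e1 false true
  have a7 := e1 true false
  have a8 := e1 true true
  have a9 := e2 false false
  have a10 := e2 false true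
  have a11 := e2 true false
  have a12 := e2 true true
  have ev : ∀ a b c, triEven.count (a, b, c) = if (a ^^ b ^^ c) = true then 0 else 1 := by decide
  have od : ∀ a b c, triOdd.count (a, b, c) = if (a ^^ b ^^ c) = true then 1 else 0 := by decide
  refine ⟨s.count (false, false, false) - t.count (false, false, false),
    s - (s.count (false, false, false) - t.count (false, false, false)) • triEven, ?_, ?_⟩
  · ext ⟨a, b, c⟩
    rw [Multiset.count_add, Multiset.count_sub, Multiset.count_nsmul, ev]
    cases a <;> cases b <;> cases c <;>
      simp only [Bool.xor_false, Bool.xor_true, Bool.not_true, Bool.not_false, if_true,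
        Bool.false_eq_true, if_false] <;> omega
  · ext ⟨a, b, c⟩
    rw [Multiset.count_add, Multiset.count_sub, Multiset.count_nsmul, Multiset.count_nsmul, ev, od]
    cases a <;> cases b <;> cases c <;>
      simp only [Bool.xor_false, Bool.xor_true, Bool.not_true, Bool.not_false, if_true,
        Bool.false_eq_true, if_false] <;> omega

theorem triEven_odd : margCon triEdge triEven triOdd := by
  have : ∀ i : Fin 3, triEven.map (triEdge i) = triOdd.map (triEdge i) := by decide
  exact this

theorem rel_nsmul {Ω : Type} {r : Multiset Ω → Multiset Ω → Prop} {s t : Multiset Ω}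
    (h : AddConGen.Rel r s t) (k : ℕ) : AddConGen.Rel r (k • s) (k • t) := by
  induction k with
  | zero => rw [zero_nsmul, zero_nsmul]; exact AddConGen.Rel.refl _
  | succ k ih => rw [succ_nsmul, succ_nsmul]; exact ih.add h

theorem gen_tri : Gen (margCon triEdge) {2, 4} := by
  have key : ∀ s t, margCon triEdge s t →
      t.count (false, false, false) ≤ s.count (false, false, false) →
      AddConGen.Rel (Mv (margCon triEdge) {2, 4}) s t := by
    intro s t h hle
    obtain ⟨k, u, rfl, rfl⟩ := tri_key h hle
    refine (rel_nsmul (AddConGen.Rel.of _ _ ⟨triEven_odd, rfl, ?_⟩) k).add (AddConGen.Rel.refl _)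
    exact Or.inr rfl
  intro s t h
  rcases le_total (t.count (false, false, false)) (s.count (false, false, false)) with hle | hle
  · exact key s t h hle
  · exact (key t s ((margCon triEdge).symm h) hle).symm

/-- The two edges of the triangle other than the chord. -/
def triPath (i : Fin 2) : Bool × Bool × Bool → Bool × Bool := triEdge i.castSucc

theorem gen_triPath : Gen (margCon triPath) {2} := by
  have fib : IsFib (triPath 0) (triPath 1) Prod.snd Prod.fst := by
    refine ⟨?_, ?_, ?_⟩ <;> decide
  refine fib.gen (K1 := margCon fun _ : Unit => id) (K2 := margCon fun _ : Unit => id)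
    rfl ?_ ?_ ?_ (gen_of_injective _ () Function.injective_id _)
    (gen_of_injective _ () Function.injective_id _)
  · intro s t
    simp [margCon_iff, Fin.forall_fin_two]
  · intro s t h
    have := h ()
    simp only [Multiset.map_id] at this
    rw [this]
  · intro s t h
    have := h ()
    simp only [Multiset.map_id] at this
    rw [this]

/-- Edge marginals of a path on `n + 2` vertices. -/
def pathEdge (n : ℕ) (i : Fin (n + 1)) (I : Fin (n + 2) → Bool) : Bool × Bool :=
  (I i.castSucc, I i.succ)

/-- The pair of end points of a path. -/
def ends (n : ℕ) (I : Fin (n + 2) → Bool) : Bool × Bool := (I 0, I (Fin.last _))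

/-- Edge marginals of a cycle on `n + 2` vertices. -/
def cycEdge (n : ℕ) : Option (Fin (n + 1)) → (Fin (n + 2) → Bool) → Bool × Bool
  | none => ends n
  | some i => pathEdge n i

theorem cycEdge_iff (n : ℕ) (s t : Multiset (Fin (n + 2) → Bool)) :
    margCon (cycEdge n) s t ↔ margCon (pathEdge n) s t ∧ s.map (ends n) = t.map (ends n) := by
  simp [margCon_iff, Option.forall, cycEdge, and_comm]

theorem path_succ_iff (n : ℕ) (s t : Multiset (Fin (n + 3) → Bool)) :
    margCon (pathEdge (n + 1)) s t ↔
      margCon (pathEdge n) (s.map Fin.init) (t.map Fin.init) ∧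
      s.map (pathEdge (n + 1) (Fin.last _)) = t.map (pathEdge (n + 1) (Fin.last _)) := by
  rw [margCon_iff, margCon_iff, Fin.forall_fin_succ']
  simp only [Multiset.map_map]
  rfl

theorem path_det (n : ℕ) : Det (margCon (pathEdge n)) (ends n) := by
  intro s t h
  have h0 := congrArg (Multiset.map Prod.fst) (h 0)
  have h1 := congrArg (Multiset.map Prod.snd) (h (Fin.last _))
  simp only [Multiset.map_map] at h0 h1 ⊢
  exact ⟨h0, h1⟩

theorem gen_path (n : ℕ) : Gen (margCon (pathEdge n)) {2} := by
  induction n with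
  | zero =>
    refine gen_of_injective _ 0 ?_ _
    intro I J h
    have h1 := congrArg Prod.fst h
    have h2 := congrArg Prod.snd h
    funext i
    fin_cases i
    · exact h1
    · exact h2
  | succ n ih =>
    have fib : IsFib (Fin.init : (Fin (n + 3) → Bool) → Fin (n + 2) → Bool)
        (pathEdge (n + 1) (Fin.last _)) (fun I => I (Fin.last _)) Prod.fst := by
      refine ⟨fun I => rfl, ?_, ?_⟩
      · rintro I ⟨a, b⟩ h
        refine ⟨Fin.snoc (α := fun _ => Bool) I b, Fin.init_snoc _ _, ?_⟩
        change I (Fin.last _) = a at h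
        simp only [pathEdge, Fin.snoc_castSucc, Fin.succ_last, Fin.snoc_last, h]
      · intro I J h1 h2
        have h2 := congrArg Prod.snd h2
        simp only [pathEdge, Fin.succ_last] at h2
        rw [← Fin.snoc_init_self I, ← Fin.snoc_init_self J, h1, h2]
    refine fib.gen (K1 := margCon (pathEdge n)) (K2 := margCon fun _ : Unit => id)
      rfl ?_ ?_ ?_ ih (gen_of_injective _ () Function.injective_id _)
    · intro s t
      rw [path_succ_iff, margCon_iff (fun _ : Unit => id)]
      simp
    · intro s t h
      have := (path_det n s t h).2
      simp only [Multiset.map_map] at this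
      exact this
    · intro s t h
      have := h ()
      simp only [Multiset.map_id] at this
      rw [this]

/-- Restriction of a state to the last triangle. -/
def lastTri (n : ℕ) (I : Fin (n + 3) → Bool) : Bool × Bool × Bool :=
  (I 0, I (Fin.last _), I (Fin.last _).castSucc)

theorem fib_lastTri (n : ℕ) : IsFib (Fin.init : (Fin (n + 3) → Bool) → Fin (n + 2) → Bool)
    (lastTri n) (ends n) (triEdge 2) := by
  refine ⟨fun I => rfl, ?_, ?_⟩
  · rintro I ⟨a, x, b⟩ h
    refine ⟨Fin.snoc (α := fun _ => Bool) I x, Fin.init_snoc _ _, ?_⟩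
    have h1 : I 0 = a := congrArg Prod.fst h
    have h2 : I (Fin.last _) = b := congrArg Prod.snd h
    simp only [lastTri, Fin.snoc_castSucc, Fin.snoc_last, h2, Prod.mk.injEq, and_true]
    rw [← h1, ← Fin.castSucc_zero, Fin.snoc_castSucc]
  · intro I J h1 h2
    have h2 : I (Fin.last _) = J (Fin.last _) := congrArg (fun w => w.2.1) h2
    rw [← Fin.snoc_init_self I, ← Fin.snoc_init_self J, h1, h2]

theorem map_swap_iff {Ω : Type} (f : Ω → Bool × Bool) (s t : Multiset Ω) :
    s.map (fun w => (f w).swap) = t.map (fun w => (f w).swap) ↔ s.map f = t.map f := by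
  have : ∀ u : Multiset Ω, u.map (fun w => (f w).swap) = (u.map f).map Prod.swap := by
    intro u; rw [Multiset.map_map]; rfl
  rw [this, this]
  exact (Multiset.map_injective Prod.swap_injective).eq_iff

theorem cyc_succ_iff (n : ℕ) (s t : Multiset (Fin (n + 3) → Bool)) :
    margCon (cycEdge (n + 1)) s t ↔
      margCon (pathEdge n) (s.map Fin.init) (t.map Fin.init) ∧
      margCon triPath (s.map (lastTri n)) (t.map (lastTri n)) := by
  rw [cycEdge_iff, path_succ_iff, margCon_iff triPath, Fin.forall_fin_two, and_assoc]
  refine and_congr_right fun _ => ?_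
  simp only [Multiset.map_map]
  rw [and_comm, ← map_swap_iff (pathEdge (n + 1) (Fin.last _))]
  rfl

theorem gen_cyc (n : ℕ) : Gen (margCon (cycEdge n)) {2, 4} := by
  induction n with
  | zero =>
    refine gen_of_injective _ none ?_ _
    intro I J h
    have h1 := congrArg Prod.fst h
    have h2 := congrArg Prod.snd h
    funext i
    fin_cases i
    · exact h1
    · exact h2
  | succ n ih =>
    have h2 : (2 : ℕ) ∈ ({2, 4} : Set ℕ) := Or.inl rfl
    refine (fib_lastTri n).gen_chord h2
      (K' := margCon (cycEdge (n + 1)) ⊓ margCon fun (_ : Unit) I => ends n (Fin.init I))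
      (cyc_succ_iff n) ?_ (path_det n) ?_ (gen_path n) gen_triPath ?_
    · intro s t
      rw [AddCon.inf_iff_and, margCon_iff (fun (_ : Unit) (I : Fin (n + 3) → Bool) => ends n (Fin.init I)),
        Multiset.map_map, Multiset.map_map]
      simp only [forall_const]
      rfl
    · intro s t h
      have h0 := congrArg (Multiset.map Prod.fst) (h 0)
      have h1 := congrArg (Multiset.map Prod.snd) (h 1)
      simp only [Multiset.map_map] at h0 h1 ⊢
      exact ⟨h0, h1⟩
    · refine (fib_lastTri n).gen h2 (K1 := margCon (cycEdge n)) (K2 := margCon triEdge)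
        ?_ ?_ ?_ ih gen_tri
      · intro s t
        rw [AddCon.inf_iff_and, cyc_succ_iff, cycEdge_iff,
          margCon_iff (fun (_ : Unit) (I : Fin (n + 3) → Bool) => ends n (Fin.init I)), margCon_iff triEdge,
          margCon_iff triPath, Fin.forall_fin_succ' (n := 2)]
        simp only [forall_const, Multiset.map_map]
        have e : ∀ u : Multiset (Fin (n + 3) → Bool),
          u.map (triEdge (Fin.last 2) ∘ lastTri n) = u.map (fun I => ends n (Fin.init I)) :=
          fun u => rfl
        have e' : ∀ u : Multiset (Fin (n + 3) → Bool),
          u.map (ends n ∘ Fin.init) = u.map (fun I => ends n (Fin.init I)) :=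
          fun u => rfl
        rw [e, e, e', e']
        unfold triPath
        tauto
      · intro s t h
        exact h none
      · intro s t h
        exact h 2

end Models

section Algebra

/-- The monomial attached to a multiset of variables. -/
noncomputable def mon {σ : Type} (s : Multiset σ) : MvPolynomial σ ℂ :=
  (s.map X).prod

theorem mon_add {σ : Type} (s t : Multiset σ) : mon (s + t) = mon s * mon t := by
  simp [mon]

theorem mon_homogeneous {σ : Type} (s : Multiset σ) : (mon s).IsHomogeneous s.card := by
  induction s using Multiset.induction_on with
  | empty => simpa [mon] using isHomogeneous_one σ ℂ
  | cons a s ih =>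
    rw [← Multiset.singleton_add, mon_add, Multiset.card_add]
    refine IsHomogeneous.mul ?_ ih
    simpa [mon] using isHomogeneous_X ℂ a

theorem monomial_toFinsupp {σ : Type} [DecidableEq σ] (s : Multiset σ) :
    (monomial (Multiset.toFinsupp s) (1 : ℂ)) = mon s := by
  induction s using Multiset.induction_on with
  | empty => simp [mon]
  | cons a s ih =>
    rw [← Multiset.singleton_add, mon_add, ← ih, map_add, Multiset.toFinsupp_singleton]
    have : mon {a} = monomial (Finsupp.single a 1) (1 : ℂ) := by simp [mon, X]
    rw [this, monomial_mul, one_mul]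

/-- Total exponent of a multiset. -/
noncomputable def expo {Ω τ : Type} (A : Ω → τ →₀ ℕ) (s : Multiset Ω) : τ →₀ ℕ := (s.map A).sum

variable {Ω τ : Type} {A : Ω → τ →₀ ℕ} {ψ : MvPolynomial Ω ℂ →ₐ[ℂ] MvPolynomial τ ℂ}

theorem psi_mon (hψ : ∀ I, ψ (X I) = monomial (A I) 1) (s : Multiset Ω) :
    ψ (mon s) = monomial (expo A s) 1 := by
  induction s using Multiset.induction_on with
  | empty => simp [mon, expo]
  | cons a s ih =>
    rw [← Multiset.singleton_add, mon_add, map_mul, ih]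
    have : ψ (mon {a}) = monomial (A a) 1 := by simp [mon, hψ]
    rw [this, monomial_mul, one_mul]
    simp [expo]

theorem mem_of_conn {K : AddCon (Multiset Ω)} {D : Set ℕ} {J : Ideal (MvPolynomial Ω ℂ)}
    (hJ : ∀ s t, Mv K D s t → mon s - mon t ∈ J) {s t : Multiset Ω}
    (h : AddConGen.Rel (Mv K D) s t) : mon s - mon t ∈ J := by
  induction h with
  | of s t h => exact hJ s t h
  | refl s => simp
  | symm _ ih => rw [← neg_sub]; exact J.neg_mem ih
  | trans _ _ ih1 ih2 =>
    have := J.add_mem ih1 ih2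
    simpa using this
  | @add w x y z _ _ ih1 ih2 =>
    rw [mon_add, mon_add]
    have : mon w * mon y - mon x * mon z = mon y * (mon w - mon x) + mon x * (mon y - mon z) := by
      ring
    rw [this]
    exact J.add_mem (J.mul_mem_left _ ih1) (J.mul_mem_left _ ih2)

theorem ker_le [DecidableEq Ω] (hψ : ∀ I, ψ (X I) = monomial (A I) 1)
    (J : Ideal (MvPolynomial Ω ℂ))
    (hJ : ∀ s t, expo A s = expo A t → mon s - mon t ∈ J) {f : MvPolynomial Ω ℂ}
    (hf : ψ f = 0) : f ∈ J := by
  classical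
  let rep : (τ →₀ ℕ) → Multiset Ω := fun v => if h : ∃ s, expo A s = v then h.choose else 0
  have hrep : ∀ s, expo A (rep (expo A s)) = expo A s := by
    intro s
    have h : ∃ s', expo A s' = expo A s := ⟨s, rfl⟩
    simp only [rep, dif_pos h]
    exact h.choose_spec
  let q := Ideal.Quotient.mkₐ ℂ J
  let L : MvPolynomial τ ℂ →ₗ[ℂ] (MvPolynomial Ω ℂ ⧸ J) :=
    (basisMonomials τ ℂ).constr ℂ fun v => q (mon (rep v))
  have hL : ∀ v, L (monomial v 1) = q (mon (rep v)) := by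
    intro v
    have := (basisMonomials τ ℂ).constr_basis ℂ (fun v => q (mon (rep v))) v
    rwa [coe_basisMonomials] at this
  have key : L ∘ₗ ψ.toLinearMap = q.toLinearMap := by
    refine (basisMonomials Ω ℂ).ext fun m => ?_
    rw [coe_basisMonomials]
    obtain ⟨s, rfl⟩ := Multiset.toFinsupp.surjective m
    simp only [monomial_toFinsupp, LinearMap.comp_apply, AlgHom.toLinearMap_apply]
    rw [psi_mon hψ, hL]
    exact (Ideal.Quotient.mk_eq_mk_iff_sub_mem _ _).2 (hJ _ _ (hrep s))
  have := LinearMap.congr_fun key f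
  simp only [LinearMap.comp_apply, AlgHom.toLinearMap_apply, hf, map_zero] at this
  exact Ideal.Quotient.eq_zero_iff_mem.1 this.symm

theorem coeff_zero_of_unique [DecidableEq Ω] (hψ : ∀ I, ψ (X I) = monomial (A I) 1)
    {u : Multiset Ω} (hu : ∀ v, expo A v = expo A u → v = u) {f : MvPolynomial Ω ℂ}
    (hf : ψ f = 0) : coeff (Multiset.toFinsupp u) f = 0 := by
  classical
  have key : (lcoeff ℂ (expo A u)) ∘ₗ ψ.toLinearMap = lcoeff ℂ (Multiset.toFinsupp u) := by
    refine (basisMonomials Ω ℂ).ext fun m => ?_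
    rw [coe_basisMonomials]
    obtain ⟨s, rfl⟩ := Multiset.toFinsupp.surjective m
    simp only [LinearMap.comp_apply, AlgHom.toLinearMap_apply, lcoeff_apply]
    rw [monomial_toFinsupp, psi_mon hψ, ← monomial_toFinsupp, coeff_monomial, coeff_monomial]
    by_cases h : s = u
    · subst h; simp
    · rw [if_neg (fun h' => h (hu s h')), if_neg (fun h' => h (Multiset.toFinsupp.injective h'))]
  have := LinearMap.congr_fun key f
  simp only [LinearMap.comp_apply, AlgHom.toLinearMap_apply, hf, map_zero, lcoeff_apply] at this
  exact this.symm

theorem span_coeff_zero [DecidableEq Ω] (s0 : Multiset Ω) (S : Set (MvPolynomial Ω ℂ))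
    (hS : ∀ f ∈ S, ∀ u ≤ s0, coeff (Multiset.toFinsupp u) f = 0) {f : MvPolynomial Ω ℂ}
    (hf : f ∈ Ideal.span S) : ∀ u ≤ s0, coeff (Multiset.toFinsupp u) f = 0 := by
  induction hf using Submodule.span_induction with
  | mem f hf => exact hS f hf
  | zero => intro u _; simp
  | add f g _ _ h1 h2 => intro u hu; rw [coeff_add, h1 u hu, h2 u hu, add_zero]
  | smul a f _ h =>
    intro u hu
    rw [smul_eq_mul, coeff_mul]
    refine Finset.sum_eq_zero fun x hx => ?_
    rw [HasAntidiagonal.mem_antidiagonal] at hx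
    obtain ⟨v, hv⟩ := Multiset.toFinsupp.surjective x.2
    rw [← hv, h v, mul_zero]
    refine le_trans ?_ hu
    obtain ⟨w, hw⟩ := Multiset.toFinsupp.surjective x.1
    rw [← hv, ← hw, ← map_add] at hx
    rw [← Multiset.toFinsupp.injective hx]
    exact Multiset.le_add_left _ _

theorem expo_sum {E β : Type} [Fintype E] (f : E → Ω → β) (var : E → β → τ)
    (hA : ∀ I, A I = ∑ i, Finsupp.single (var i (f i I)) 1) (s : Multiset Ω) :
    expo A s = ∑ i, ((s.map (f i)).map fun x => Finsupp.single (var i x) 1).sum := by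
  induction s using Multiset.induction_on with
  | empty => simp [expo]
  | cons a s ih =>
    simp only [expo, Multiset.map_cons, Multiset.sum_cons, Finset.sum_add_distrib] at ih ⊢
    rw [ih, hA]

theorem expo_apply {E β : Type} [Fintype E] [DecidableEq β] (f : E → Ω → β) (var : E → β → τ)
    (hA : ∀ I, A I = ∑ i, Finsupp.single (var i (f i I)) 1)
    (hv : ∀ i j x y, var i x = var j y → i = j ∧ x = y) (s : Multiset Ω) (i : E) (x : β) :
    expo A s (var i x) = (s.map (f i)).count x := by
  classical
  induction s using Multiset.induction_on with
  | empty => simp [expo]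
  | cons a s ih =>
    simp only [expo, Multiset.map_cons, Multiset.sum_cons, Finsupp.add_apply] at ih ⊢
    rw [ih, Multiset.count_cons, hA, Finsupp.finsetSum_apply, add_comm]
    congr 1
    rw [Finset.sum_eq_single i]
    · rw [Finsupp.single_apply]
      refine if_congr ⟨fun h => (hv _ _ _ _ h).2.symm, fun h => by rw [h]⟩ rfl rfl
    · intro j _ hj
      rw [Finsupp.single_apply, if_neg]
      exact fun h => hj (hv _ _ _ _ h).1
    · simp

theorem expo_iff {E β : Type} [Fintype E] (f : E → Ω → β) (var : E → β → τ)
    (hA : ∀ I, A I = ∑ i, Finsupp.single (var i (f i I)) 1)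
    (hv : ∀ i j x y, var i x = var j y → i = j ∧ x = y) (s t : Multiset Ω) :
    expo A s = expo A t ↔ margCon f s t := by
  classical
  constructor
  · intro h i
    ext x
    rw [← expo_apply f var hA hv, ← expo_apply f var hA hv, h]
  · intro h
    rw [expo_sum f var hA, expo_sum f var hA]
    exact Finset.sum_congr rfl fun i _ => by rw [h i]

end Algebra

section Cycle

/-- The edges of the cycle. -/
def cEdge (N : ℕ) : Option (Fin (N + 2)) → Fin (N + 3) × Fin (N + 3)
  | none => (0, Fin.last _)
  | some i => (i.castSucc, i.succ)

theorem cycEdge_eq (N : ℕ) (i : Option (Fin (N + 2))) (I : Fin (N + 3) → Bool) :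
    cycEdge (N + 1) i I = (I (cEdge N i).1, I (cEdge N i).2) := by
  cases i <;> rfl

theorem cEdge_inj (N : ℕ) {i j : Option (Fin (N + 2))}
    (h : (cEdge N i = cEdge N j) ∨ (cEdge N i = (cEdge N j).swap)) : i = j := by
  rcases i with _ | i <;> rcases j with _ | j <;>
    simp only [cEdge, Prod.mk.injEq, Prod.swap_prod_mk, Fin.ext_iff, Fin.val_castSucc,
      Fin.val_succ, Fin.val_zero, Fin.val_last, Option.some.injEq, reduceCtorEq] at h ⊢ <;> omega

/-- The variable of the target ring attached to an edge and a pair of values. -/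
def cVar (N : ℕ) (i : Option (Fin (N + 2))) (x : Bool × Bool) :
    Sym2 (Fin (N + 3) × Bool) ⊕ (Fin (N + 3) × Bool) :=
  Sum.inl s(((cEdge N i).1, x.1), ((cEdge N i).2, x.2))

theorem cVar_inj (N : ℕ) (i j : Option (Fin (N + 2))) (x y : Bool × Bool)
    (h : cVar N i x = cVar N j y) : i = j ∧ x = y := by
  have h := Sum.inl_injective h
  rw [Sym2.eq_iff] at h
  obtain ⟨x1, x2⟩ := x
  obtain ⟨y1, y2⟩ := y
  simp only [Prod.mk.injEq] at h
  rcases h with ⟨⟨a, b⟩, c, d⟩ | ⟨⟨a, b⟩, c, d⟩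
  · exact ⟨cEdge_inj N (Or.inl (Prod.ext a c)), by rw [b, d]⟩
  · have hij : i = j := cEdge_inj N (Or.inr (Prod.ext a c))
    subst hij
    exfalso
    rcases i with _ | i <;> simp only [cEdge, Fin.ext_iff, Fin.val_castSucc,
      Fin.val_succ, Fin.val_zero, Fin.val_last] at a <;> omega

theorem cEdge_adj (N : ℕ) (i : Option (Fin (N + 2))) :
    (SimpleGraph.cycleGraph (N + 3)).Adj (cEdge N i).1 (cEdge N i).2 := by
  rw [SimpleGraph.cycleGraph_adj]
  rcases i with _ | i
  · left
    simp only [cEdge]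
    rw [sub_eq_iff_eq_add, add_comm (1 : Fin (N + 3)), Fin.last_add_one]
  · right
    simp only [cEdge]
    rw [sub_eq_iff_eq_add, add_comm (1 : Fin (N + 3)), Fin.coeSucc_eq_succ]

theorem exists_cEdge (N : ℕ) (e : Sym2 (Fin (N + 3)))
    (h : e ∈ (SimpleGraph.cycleGraph (N + 3)).edgeSet) :
    ∃ i, s((cEdge N i).1, (cEdge N i).2) = e := by
  have key : ∀ v : Fin (N + 3), ∃ i, s((cEdge N i).1, (cEdge N i).2) = s(v, v + 1) := by
    intro v
    cases v using Fin.lastCases with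
    | last =>
      refine ⟨none, ?_⟩
      rw [Fin.last_add_one, Sym2.eq_swap]
      rfl
    | cast i =>
      refine ⟨some i, ?_⟩
      rw [Fin.coeSucc_eq_succ]
      rfl
  induction e using Sym2.ind with
  | _ u v =>
    rw [SimpleGraph.mem_edgeSet, SimpleGraph.cycleGraph_adj] at h
    rcases h with h | h
    · rw [sub_eq_iff_eq_add] at h
      obtain ⟨i, hi⟩ := key v
      exact ⟨i, by rw [hi, h, Sym2.eq_swap, add_comm (1 : Fin (N + 3))]⟩
    · rw [sub_eq_iff_eq_add] at h
      obtain ⟨i, hi⟩ := key u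
      exact ⟨i, by rw [hi, h, add_comm (1 : Fin (N + 3))]⟩

/-- The exponent of the image of a variable. -/
noncomputable def cA (N : ℕ) (I : Fin (N + 3) → Bool) :
    (Sym2 (Fin (N + 3) × Bool) ⊕ (Fin (N + 3) × Bool)) →₀ ℕ :=
  ∑ i, Finsupp.single (cVar N i (cycEdge (N + 1) i I)) 1

theorem phi_X_general {W E : Type} [Fintype W] [DecidableEq W] [Fintype E] (G : SimpleGraph W)
    (iso : ∀ l : W, ¬ ∀ k, ¬ G.Adj l k) (e : E → Sym2 W) (he : ∀ i, e i ∈ G.edgeSet)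
    (hinj : Function.Injective e) (hsurj : ∀ x ∈ G.edgeSet, ∃ i, e i = x) (I : W → Bool) :
    phi G (X I) = ∏ i, X (Sum.inl (Sym2.map (fun v => (v, I v)) (e i))) := by
  unfold phi
  letI : DecidableRel G.Adj := Classical.decRel _
  simp only [aeval_X]
  refine (congrArg₂ (· * ·) rfl (Finset.prod_eq_one fun l hl => ?_)).trans ?_
  · exact absurd (Finset.mem_filter.1 hl).2 (iso l)
  simp only [mul_one]
  symm
  refine Finset.prod_bij (fun i _ => e i) ?_ ?_ ?_ ?_
  · intro i _
    exact SimpleGraph.mem_edgeFinset.2 (he i)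
  · intro i _ j _ h
    exact hinj h
  · intro x hx
    obtain ⟨i, hi⟩ := hsurj x (SimpleGraph.mem_edgeFinset.1 hx)
    exact ⟨i, Finset.mem_univ _, hi⟩
  · intro i _
    rfl

theorem phi_X (N : ℕ) (I : Fin (N + 3) → Bool) :
    phi (SimpleGraph.cycleGraph (N + 3)) (X I) = monomial (cA N I) 1 := by
  classical
  have iso : ∀ l : Fin (N + 3), ¬ ∀ k, ¬ (SimpleGraph.cycleGraph (N + 3)).Adj l k := by
    intro l h
    exact h (l + 1) (by rw [SimpleGraph.cycleGraph_adj]; right; simp)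
  rw [phi_X_general _ iso (fun i => s((cEdge N i).1, (cEdge N i).2)) ?_ ?_ ?_ I, cA,
    monomial_sum_one]
  · refine Finset.prod_congr rfl fun i _ => ?_
    rw [cycEdge_eq]
    rfl
  · exact fun i => cEdge_adj N i
  · intro i j h
    rw [Sym2.eq_iff] at h
    apply cEdge_inj
    rcases h with h | h
    · exact Or.inl (Prod.ext h.1 h.2)
    · exact Or.inr (Prod.ext h.1 h.2)
  · exact fun e he => exists_cEdge N e he

theorem cExpo_iff (N : ℕ) (s t : Multiset (Fin (N + 3) → Bool)) :
    expo (cA N) s = expo (cA N) t ↔ margCon (cycEdge (N + 1)) s t :=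
  expo_iff _ (cVar N) (fun _ => rfl) (cVar_inj N) s t

theorem mem_toric (N : ℕ) (f : MvPolynomial (Fin (N + 3) → Bool) ℂ) :
    f ∈ toricIdeal (SimpleGraph.cycleGraph (N + 3)) ↔
      phi (SimpleGraph.cycleGraph (N + 3)) f = 0 := by
  rfl

theorem binom_mem (N : ℕ) {s t : Multiset (Fin (N + 3) → Bool)}
    (h : margCon (cycEdge (N + 1)) s t) :
    mon s - mon t ∈ toricIdeal (SimpleGraph.cycleGraph (N + 3)) := by
  rw [mem_toric, map_sub, psi_mon (phi_X N), psi_mon (phi_X N), (cExpo_iff N s t).2 h, sub_self]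

theorem toric_eq (N : ℕ) : toricIdeal (SimpleGraph.cycleGraph (N + 3)) =
      Ideal.span {f : MvPolynomial (Fin (N + 3) → Bool) ℂ |
        f ∈ toricIdeal (SimpleGraph.cycleGraph (N + 3)) ∧
          (f.IsHomogeneous 2 ∨ f.IsHomogeneous 4)} := by
  apply le_antisymm
  · intro f hf
    refine ker_le (phi_X N) _ ?_ hf
    intro s t hst
    refine mem_of_conn ?_ (gen_cyc (N + 1) s t ((cExpo_iff N s t).1 hst))
    rintro s t ⟨h1, h2, h3⟩
    refine Ideal.subset_span ⟨binom_mem N h1, ?_⟩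
    have hom : (mon s - mon t).IsHomogeneous s.card :=
      (mon_homogeneous s).sub (h2 ▸ mon_homogeneous t)
    rcases h3 with h3 | h3
    · left; rwa [h3] at hom
    · right; rw [Set.mem_singleton_iff] at h3; rwa [h3] at hom
  · rw [Ideal.span_le]
    exact fun f hf => hf.1

/-- Extension of a state of the triangle to the cycle, constant from vertex `2` on. -/
def extTri (N : ℕ) (w : Bool × Bool × Bool) (i : Fin (N + 3)) : Bool :=
  if i.val = 0 then w.1 else if i.val = 1 then w.2.1 else w.2.2

/-- Restriction to a triangle. -/
def lowTri (N : ℕ) (I : Fin (N + 3) → Bool) : Bool × Bool × Bool :=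
  (I 0, I 1, I (Fin.last _))

theorem lowTri_ext (N : ℕ) (w : Bool × Bool × Bool) : lowTri N (extTri N w) = w := by
  simp [lowTri, extTri]

theorem map_lowTri_ext (N : ℕ) (s : Multiset (Bool × Bool × Bool)) :
    (s.map (extTri N)).map (lowTri N) = s := by
  rw [Multiset.map_map]
  conv_rhs => rw [← Multiset.map_id s]
  exact Multiset.map_congr rfl fun w _ => lowTri_ext N w

theorem ext_cyc (N : ℕ) {s t : Multiset (Bool × Bool × Bool)} (h : margCon triEdge s t) :
    margCon (cycEdge (N + 1)) (s.map (extTri N)) (t.map (extTri N)) := by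
  have key : ∀ i : Option (Fin (N + 2)), ∃ (j : Fin 3) (g : Bool × Bool → Bool × Bool),
      ∀ w, cycEdge (N + 1) i (extTri N w) = g (triEdge j w) := by
    intro i
    rcases i with _ | i
    · refine ⟨2, id, fun w => ?_⟩
      simp [cycEdge, ends, extTri, triEdge]
    · rcases Nat.lt_or_ge i.val 1 with h0 | h0
      · refine ⟨0, id, fun w => ?_⟩
        have : i.val = 0 := by omega
        simp [cycEdge, pathEdge, extTri, triEdge, this]
      · rcases Nat.lt_or_ge i.val 2 with h1 | h1
        · refine ⟨1, id, fun w => ?_⟩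
          have : i.val = 1 := by omega
          simp [cycEdge, pathEdge, extTri, triEdge, this]
        · refine ⟨1, fun x => (x.2, x.2), fun w => ?_⟩
          have a1 : i.val ≠ 0 := by omega
          have a2 : i.val ≠ 1 := by omega
          simp [cycEdge, pathEdge, extTri, triEdge, a1, a2]
  intro i
  obtain ⟨j, g, hg⟩ := key i
  have : ∀ u : Multiset (Bool × Bool × Bool),
      (u.map (extTri N)).map (cycEdge (N + 1) i) = (u.map (triEdge j)).map g := by
    intro u
    rw [Multiset.map_map, Multiset.map_map]
    exact Multiset.map_congr rfl fun w _ => hg w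
  rw [this, this, h j]

theorem tri_unique {u v : Multiset (Bool × Bool × Bool)} (h : margCon triEdge u v)
    (hu : u ≤ triEven) (hc : u.card ≤ 3) : u = v := by
  rcases le_total (v.count (false, false, false)) (u.count (false, false, false)) with hle | hle
  · obtain ⟨k, w, h1, h2⟩ := tri_key h hle
    have hk : k = 0 := by
      have := congrArg Multiset.card h1
      rw [Multiset.card_add, Multiset.card_nsmul] at this
      have e : triEven.card = 4 := rfl
      rw [e] at this
      omega
    subst hk
    rw [h1, h2, zero_nsmul, zero_nsmul]
  · obtain ⟨k, w, h1, h2⟩ := tri_key ((margCon triEdge).symm h) hle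
    have hk : k = 0 := by
      have := Multiset.count_le_of_le (true, true, true) hu
      rw [h2, Multiset.count_add, Multiset.count_nsmul] at this
      have e : triEven.count (true, true, true) = 0 := by decide
      have e' : triOdd.count (true, true, true) = 1 := by decide
      rw [e, e'] at this
      omega
    subst hk
    rw [h1, h2, zero_nsmul, zero_nsmul]

/-- States that are constant from vertex `2` on. -/
theorem eq_ext (N : ℕ) (I : Fin (N + 3) → Bool)
    (h : ∀ i : Fin (N + 2), 2 ≤ i.val → I i.castSucc = I i.succ) : I = extTri N (lowTri N I) := by
  have c : ∀ k (hk : k + 2 < N + 3), I ⟨k + 2, hk⟩ = I ⟨2, by omega⟩ := by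
    intro k
    induction k with
    | zero => intro hk; rfl
    | succ k ih =>
      intro hk
      have := h ⟨k + 2, by omega⟩ (by simp)
      rw [← ih (by omega)]
      exact this.symm
  funext i
  have hi := i.isLt
  rcases Nat.lt_or_ge i.val 2 with h1 | h1
  · rcases Nat.lt_or_ge i.val 1 with h0 | h0
    · have : i = 0 := Fin.ext (by rw [Fin.val_zero]; omega)
      subst this
      simp [extTri, lowTri]
    · have : i = 1 := Fin.ext (by simp; omega)
      subst this
      simp [extTri, lowTri]
  · have a1 : i.val ≠ 0 := by omega
    have a2 : i.val ≠ 1 := by omega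
    simp only [extTri, lowTri, a1, a2, if_false]
    have e1 := c (i.val - 2) (by omega)
    have e2 := c N (by omega)
    have e3 : (⟨i.val - 2 + 2, by omega⟩ : Fin (N + 3)) = i := Fin.ext (by simp; omega)
    rw [e3] at e1
    rw [e1, ← e2]
    rfl

theorem cyc_unique (N : ℕ) {u v : Multiset (Fin (N + 3) → Bool)}
    (hu : u ≤ triEven.map (extTri N)) (hc : u.card ≤ 3)
    (h : margCon (cycEdge (N + 1)) v u) : v = u := by
  have hu1 : ∀ I ∈ u, ∀ i : Fin (N + 2), 2 ≤ i.val → I i.castSucc = I i.succ := by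
    intro I hI i hi
    obtain ⟨w, _, rfl⟩ := Multiset.mem_map.1 (Multiset.mem_of_le hu hI)
    have a1 : i.val ≠ 0 := by omega
    have a2 : i.val ≠ 1 := by omega
    simp [extTri, a1, a2]
  have hv1 : ∀ I ∈ v, ∀ i : Fin (N + 2), 2 ≤ i.val → I i.castSucc = I i.succ := by
    intro I hI i hi
    have : cycEdge (N + 1) (some i) I ∈ v.map (cycEdge (N + 1) (some i)) :=
      Multiset.mem_map_of_mem _ hI
    rw [h (some i)] at this
    obtain ⟨I', hI', e⟩ := Multiset.mem_map.1 this
    have e1 : I' i.castSucc = I i.castSucc := congrArg Prod.fst e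
    have e2 : I' i.succ = I i.succ := congrArg Prod.snd e
    rw [← e1, ← e2, hu1 I' hI' i hi]
  have rec_ : ∀ x : Multiset (Fin (N + 3) → Bool),
      (∀ I ∈ x, ∀ i : Fin (N + 2), 2 ≤ i.val → I i.castSucc = I i.succ) →
      (x.map (lowTri N)).map (extTri N) = x := by
    intro x hx
    rw [Multiset.map_map]
    conv_rhs => rw [← Multiset.map_id x]
    exact Multiset.map_congr rfl fun I hI => (eq_ext N I (hx I hI)).symm
  have tr1 : ∀ x : Multiset (Fin (N + 3) → Bool),
      (∀ I ∈ x, ∀ i : Fin (N + 2), 2 ≤ i.val → I i.castSucc = I i.succ) →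
      (x.map (lowTri N)).map (triEdge 1) = x.map (cycEdge (N + 1) (some 1)) := by
    intro x hx
    rw [Multiset.map_map]
    refine Multiset.map_congr rfl fun I hI => ?_
    have e := eq_ext N I (hx I hI)
    have : I (Fin.succ 1) = I (Fin.last _) := by
      have e2 : 2 % (N + 3) = 2 := Nat.mod_eq_of_lt (by omega)
      rw [e]
      simp [extTri, e2]
    change (I 1, I (Fin.last _)) = (I (Fin.castSucc 1), I (Fin.succ 1))
    rw [this]
    rfl
  have htri : margCon triEdge (u.map (lowTri N)) (v.map (lowTri N)) := by
    intro j
    fin_cases j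
    · have := h (some 0)
      change (u.map (lowTri N)).map (triEdge 0) = (v.map (lowTri N)).map (triEdge 0)
      rw [Multiset.map_map, Multiset.map_map]
      exact this.symm
    · change (u.map (lowTri N)).map (triEdge 1) = (v.map (lowTri N)).map (triEdge 1)
      rw [tr1 u hu1, tr1 v hv1]
      exact (h (some 1)).symm
    · have := h none
      change (u.map (lowTri N)).map (triEdge 2) = (v.map (lowTri N)).map (triEdge 2)
      rw [Multiset.map_map, Multiset.map_map]
      exact this.symm
  have := tri_unique htri (by
    have := Multiset.map_le_map (f := lowTri N) hu
    rwa [map_lowTri_ext] at this) (by rwa [Multiset.card_map])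
  rw [← rec_ u hu1, ← rec_ v hv1, this]

theorem not_gen_three (N : ℕ) : ¬ GenInDegLE (SimpleGraph.cycleGraph (N + 3)) 3 := by
  intro hgen
  have hmem := binom_mem N (ext_cyc N triEven_odd)
  rw [GenInDegLE] at hgen
  rw [hgen] at hmem
  have hcard : (triEven.map (extTri N)).card = 4 := by
    rw [Multiset.card_map]; rfl
  have key := span_coeff_zero (triEven.map (extTri N)) _ ?_ hmem _ le_rfl
  · rw [coeff_sub, ← monomial_toFinsupp, ← monomial_toFinsupp, coeff_monomial, coeff_monomial,
      if_pos rfl, if_neg] at key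
    · simp at key
    · intro h
      have h := congrArg (Multiset.map (lowTri N)) (Multiset.toFinsupp.injective h)
      rw [map_lowTri_ext, map_lowTri_ext] at h
      revert h
      decide
  · rintro f ⟨hf, hdeg⟩ u hu
    rcases Nat.lt_or_ge 3 u.card with h4 | h3
    · apply coeff_eq_zero_of_totalDegree_lt
      refine lt_of_le_of_lt hdeg ?_
      have e : ∑ i ∈ (Multiset.toFinsupp u).support, (Multiset.toFinsupp u) i = u.card := by
        simp
      rw [e]
      exact h4
    · refine coeff_zero_of_unique (phi_X N) (fun v hv => ?_) hf
      exact cyc_unique N hu h3 ((cExpo_iff N v u).1 hv)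

theorem gen_mono (N : ℕ) {d e : ℕ} (hde : d ≤ e)
    (h : GenInDegLE (SimpleGraph.cycleGraph (N + 3)) d) :
    GenInDegLE (SimpleGraph.cycleGraph (N + 3)) e := by
  apply le_antisymm
  · refine (le_of_eq h).trans (Ideal.span_mono ?_)
    exact fun f hf => ⟨hf.1, hf.2.trans hde⟩
  · rw [Ideal.span_le]
    exact fun f hf => hf.1

theorem gen_four (N : ℕ) : GenInDegLE (SimpleGraph.cycleGraph (N + 3)) 4 := by
  apply le_antisymm
  · refine (le_of_eq (toric_eq N)).trans (Ideal.span_mono ?_)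
    rintro f ⟨hf, h | h⟩
    · exact ⟨hf, h.totalDegree_le.trans (by norm_num)⟩
    · exact ⟨hf, h.totalDegree_le⟩
  · rw [Ideal.span_le]
    exact fun f hf => hf.1

theorem width_eq (N : ℕ) : markovWidth (SimpleGraph.cycleGraph (N + 3)) = 4 := by
  apply le_antisymm
  · exact Nat.sInf_le (gen_four N)
  · by_contra hlt
    have hm : GenInDegLE (SimpleGraph.cycleGraph (N + 3))
        (markovWidth (SimpleGraph.cycleGraph (N + 3))) :=
      Nat.sInf_mem (s := {d | GenInDegLE (SimpleGraph.cycleGraph (N + 3)) d}) ⟨4, gen_four N⟩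
    exact not_gen_three N (gen_mono N (by omega) hm)

end Cycle

/-- for `n ≥ 3`, the toric ideal of the `n`-cycle is generated by its
homogeneous elements of degrees 2 and 4, it is not generated in degree `≤ 3`, and hence the
Markov width satisfies `μ(C_n) = 4`. -/
theorem cycle_markovWidth (n : ℕ) (hn : 3 ≤ n) :
    toricIdeal (SimpleGraph.cycleGraph n) =
      Ideal.span {f : MvPolynomial (Fin n → Bool) ℂ |
        f ∈ toricIdeal (SimpleGraph.cycleGraph n) ∧
          (f.IsHomogeneous 2 ∨ f.IsHomogeneous 4)} ∧
    ¬ GenInDegLE (SimpleGraph.cycleGraph n) 3 ∧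
    markovWidth (SimpleGraph.cycleGraph n) = 4 := by
  obtain ⟨N, rfl⟩ : ∃ N, n = N + 3 := ⟨n - 3, by omega⟩
  exact ⟨toric_eq N, not_gen_three N, width_eq N⟩

end BinaryGraphModels
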